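/- arXiv:1503.05160 — 3 statements merged into one kernel-verified Lean document; each statement's English description precedes it below -/
import Mathlib

section
/- (Gauss–Markov comparison in matrix form.) Let X be a real n×p matrix such that XᵀX is invertible, and let A be any real p×n matrix satisfying AX = I_p (so that AY is a linear unbiased estimator of β in the model Y = Xβ + e with E[e] = 0). Then the matrix AAᵀ − (XᵀX)⁻¹ is positive semidefinite. Consequently, since Cov(AY) = σ²AAᵀ and Cov(β̃) = σ²(XᵀX)⁻¹ when Cov(e) = σ²Iₙ, the least squares estimator β̃ = (XᵀX)⁻¹XᵀY is the best linear unbiased estimator of β. -/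
open Matrix

/-! The fitted values of a least squares regression are the orthogonal projection `H Y` of `Y` onto
the column space of `X`. For homoscedastic uncorrelated errors, the covariance of `A Y` is the sum
of those of `A H Y` and `A (1 - H) Y`, and if `A Y` is unbiased then `A H Y` is the least squares
estimator. -/

section HatMatrix

variable {m n k R : Type*} [Fintype m] [Fintype n] [DecidableEq n] [CommRing R] [StarRing R]

/-- The hat matrix `X (XᴴX)⁻¹ Xᴴ` of a design matrix `X`, which maps a response to its least squares
fit. It is meaningful when `XᴴX` is invertible; otherwise it is `0`, by the convention for `⁻¹`. -/
noncomputable def hatMatrix (X : Matrix m n R) : Matrix m m R :=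
  X * (Xᴴ * X)⁻¹ * Xᴴ

theorem isStarProjection_hatMatrix {X : Matrix m n R} (hX : IsUnit (Xᴴ * X)) :
    IsStarProjection (hatMatrix X) where
  isIdempotentElem := by
    have hdet : IsUnit (Xᴴ * X).det := (isUnit_iff_isUnit_det _).mp hX
    calc hatMatrix X * hatMatrix X
        = X * ((Xᴴ * X)⁻¹ * (Xᴴ * X)) * (Xᴴ * X)⁻¹ * Xᴴ := by
          simp only [hatMatrix, Matrix.mul_assoc]
      _ = hatMatrix X := by rw [nonsing_inv_mul _ hdet, Matrix.mul_one, hatMatrix]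
  isSelfAdjoint :=
    isHermitian_mul_mul_conjTranspose X (isHermitian_conjTranspose_mul_self X).inv

theorem mul_one_sub_hatMatrix_mul_conjTranspose [DecidableEq m] (A : Matrix k m R)
    (X : Matrix m n R) :
    A * (1 - hatMatrix X) * Aᴴ = A * Aᴴ - A * X * (Xᴴ * X)⁻¹ * (A * X)ᴴ := by
  simp only [hatMatrix, Matrix.mul_sub, Matrix.sub_mul, Matrix.mul_one, conjTranspose_mul,
    Matrix.mul_assoc]

end HatMatrix

theorem posSemidef_of_isStarProjection {n R : Type*} [Fintype n] [Ring R] [PartialOrder R]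
    [StarRing R] [StarOrderedRing R] {P : Matrix n n R} (hP : IsStarProjection P) :
    P.PosSemidef := by
  have conjTranspose_mul_self : Pᴴ * P = P := by
    rw [← star_eq_conjTranspose, hP.isSelfAdjoint.star_eq, hP.isIdempotentElem.eq]
  exact conjTranspose_mul_self ▸ posSemidef_conjTranspose_mul_self P

/-- The condition `A * X = K` says that `A Y` is unbiased for `K β`; up to the factor `σ²`, the
matrix `K (XᴴX)⁻¹ Kᴴ` is the covariance of the least squares estimator of `K β`. -/
theorem gauss_markov_general {m n k R : Type*} [Fintype m] [Fintype n] [DecidableEq n]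
    [Finite k] [CommRing R] [PartialOrder R] [StarRing R] [StarOrderedRing R]
    {X : Matrix m n R} (hX : IsUnit (Xᴴ * X)) {A : Matrix k m R} {K : Matrix k n R}
    (hA : A * X = K) :
    (A * Aᴴ - K * (Xᴴ * X)⁻¹ * Kᴴ).PosSemidef := by
  classical
  have residual_posSemidef : (1 - hatMatrix X).PosSemidef :=
    posSemidef_of_isStarProjection (isStarProjection_hatMatrix hX).one_sub
  rw [← hA, ← mul_one_sub_hatMatrix_mul_conjTranspose]
  exact residual_posSemidef.mul_mul_conjTranspose_same A

/-- **Gauss–Markov comparison in matrix form.**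
If `XᵀX` is invertible and `A` is any `p × n` matrix with `AX = I_p`
(so `AY` is a linear unbiased estimator of `β`), then `AAᵀ − (XᵀX)⁻¹`
is positive semidefinite; hence the least squares estimator is BLUE. -/
theorem gauss_markov (n p : ℕ) (X : Matrix (Fin n) (Fin p) ℝ)
    (hX : IsUnit (Xᵀ * X)) (A : Matrix (Fin p) (Fin n) ℝ)
    (hA : A * X = 1) :
    (A * Aᵀ - (Xᵀ * X)⁻¹).PosSemidef := by
  simpa only [conjTranspose_eq_transpose_of_trivial, transpose_one, Matrix.one_mul, Matrix.mul_one]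
    using gauss_markov_general hX hA
end

section
/- (Restricted least squares estimator.) Let X be a real n×p matrix with C = XᵀX invertible, let H be a real q×p matrix such that HC⁻¹Hᵀ is invertible, let h ∈ ℝ^q, let Y ∈ ℝⁿ, and let β̃ = (XᵀX)⁻¹XᵀY. Define β̂ = β̃ − C⁻¹Hᵀ(HC⁻¹Hᵀ)⁻¹(Hβ̃ − h). Then Hβ̂ = h, and β̂ minimizes the least-squares criterion over the restricted set: for every β ∈ ℝᵖ with Hβ = h, ‖Y − Xβ̂‖₂² ≤ ‖Y − Xβ‖₂². -/
open Matrix Finset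

/-!
At a point of `{β | Hβ = h}` where the gradient of the criterion is `Hᵀl` up to a factor, the
residual is orthogonal to `Xδ` for every feasible direction `δ` (`Hδ = 0`), because
`⟨residual, Xδ⟩ = ⟨Xᵀ residual, δ⟩ = ⟨l, Hδ⟩`. By Pythagoras, moving along `δ` raises the
criterion by `‖Xδ‖²`. The points `β̃ − C⁻¹Hᵀl` satisfy this gradient condition for every `l`, and
`l = (HC⁻¹Hᵀ)⁻¹(Hβ̃ − h)` is the choice that makes such a point feasible.
-/

section RestrictedLeastSquares

variable {R n p q : Type*} [CommRing R] [Fintype n] [Fintype p] [Fintype q]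

/-- The least-squares criterion `‖Y − Xβ‖₂²`, written as a sum so that it makes sense over any
commutative ring. -/
def residualSumSq (X : Matrix n p R) (Y : n → R) (β : p → R) : R :=
  ∑ i, (Y i - (X *ᵥ β) i) ^ 2

theorem residualSumSq_add (X : Matrix n p R) (Y : n → R) (β δ : p → R) :
    residualSumSq X Y (β + δ) =
      residualSumSq X Y β - 2 * ((Y - X *ᵥ β) ⬝ᵥ (X *ᵥ δ)) + ∑ i, (X *ᵥ δ) i ^ 2 := by
  simp only [residualSumSq, dotProduct, mul_sum, ← sum_sub_distrib, ← sum_add_distrib,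
    mulVec_add, Pi.add_apply, Pi.sub_apply]
  exact sum_congr rfl fun i _ => by ring

theorem dotProduct_mulVec_eq_zero_of_transpose_mulVec_eq {X : Matrix n p R} {H : Matrix q p R}
    {u : n → R} {l : q → R} {δ : p → R} (hl : Xᵀ *ᵥ u = Hᵀ *ᵥ l) (hδ : H *ᵥ δ = 0) :
    u ⬝ᵥ (X *ᵥ δ) = 0 :=
  calc
    u ⬝ᵥ (X *ᵥ δ) = (Xᵀ *ᵥ u) ⬝ᵥ δ := by rw [dotProduct_mulVec, mulVec_transpose]
    _ = (Hᵀ *ᵥ l) ⬝ᵥ δ := by rw [hl]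
    _ = l ⬝ᵥ (H *ᵥ δ) := by rw [dotProduct_mulVec, mulVec_transpose]
    _ = 0 := by rw [hδ, dotProduct_zero]

theorem residualSumSq_le_of_transpose_mulVec_eq [LinearOrder R] [IsOrderedRing R]
    {X : Matrix n p R} {H : Matrix q p R} {Y : n → R} {l : q → R} {β₀ β : p → R}
    (hl : Xᵀ *ᵥ (Y - X *ᵥ β₀) = Hᵀ *ᵥ l) (hβ : H *ᵥ β = H *ᵥ β₀) :
    residualSumSq X Y β₀ ≤ residualSumSq X Y β := by
  have orthogonal : (Y - X *ᵥ β₀) ⬝ᵥ (X *ᵥ (β - β₀)) = 0 :=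
    dotProduct_mulVec_eq_zero_of_transpose_mulVec_eq hl (by rw [mulVec_sub, hβ, sub_self])
  have pythagoras : residualSumSq X Y β =
      residualSumSq X Y β₀ + ∑ i, (X *ᵥ (β - β₀)) i ^ 2 := by
    simpa only [add_sub_cancel, orthogonal, mul_zero, sub_zero]
      using residualSumSq_add X Y β₀ (β - β₀)
  rw [pythagoras]
  exact le_add_of_nonneg_right (sum_nonneg fun _ _ => sq_nonneg _)

theorem mulVec_sub_mulVec_inv_mulVec [DecidableEq q] {H : Matrix q p R} {K : Matrix p q R}
    (hHK : IsUnit (H * K)) (β : p → R) (h : q → R) :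
    H *ᵥ (β - K *ᵥ ((H * K)⁻¹ *ᵥ (H *ᵥ β - h))) = h := by
  rw [mulVec_sub, mulVec_mulVec, mulVec_mulVec,
    mul_nonsing_inv _ ((isUnit_iff_isUnit_det _).1 hHK), one_mulVec, sub_sub_cancel]

variable [DecidableEq p]

/-- The least-squares estimator `β̃ = C⁻¹XᵀY`, where `C = XᵀX`; it is `0` when `C` is not
invertible. -/
noncomputable def leastSquares (X : Matrix n p R) (Y : n → R) : p → R :=
  (Xᵀ * X)⁻¹ *ᵥ (Xᵀ *ᵥ Y)

theorem gram_mulVec_leastSquares {X : Matrix n p R} (hC : IsUnit (Xᵀ * X)) (Y : n → R) :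
    (Xᵀ * X) *ᵥ leastSquares X Y = Xᵀ *ᵥ Y := by
  rw [leastSquares, mulVec_mulVec, mul_nonsing_inv _ ((isUnit_iff_isUnit_det _).1 hC),
    one_mulVec]

theorem transpose_mulVec_sub_mulVec_leastSquares_sub {X : Matrix n p R}
    (hC : IsUnit (Xᵀ * X)) (Y : n → R) (v : p → R) :
    Xᵀ *ᵥ (Y - X *ᵥ (leastSquares X Y - (Xᵀ * X)⁻¹ *ᵥ v)) = v := by
  rw [mulVec_sub, mulVec_mulVec, mulVec_sub, gram_mulVec_leastSquares hC, mulVec_mulVec,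
    mul_nonsing_inv _ ((isUnit_iff_isUnit_det _).1 hC), one_mulVec, sub_sub_cancel]

variable [DecidableEq q]

/-- The Lagrange multiplier `l = (HC⁻¹Hᵀ)⁻¹(Hβ̃ − h)` of the restriction `Hβ = h`, scaled so
that `Xᵀ(Y − Xβ̂) = Hᵀl`. -/
noncomputable def restrictionMultiplier (X : Matrix n p R) (H : Matrix q p R) (h : q → R)
    (Y : n → R) : q → R :=
  (H * (Xᵀ * X)⁻¹ * Hᵀ)⁻¹ *ᵥ (H *ᵥ leastSquares X Y - h)

/-- The restricted least-squares estimator `β̂ = β̃ − C⁻¹Hᵀ(HC⁻¹Hᵀ)⁻¹(Hβ̃ − h)`. -/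
noncomputable def restrictedLeastSquares (X : Matrix n p R) (H : Matrix q p R) (h : q → R)
    (Y : n → R) : p → R :=
  leastSquares X Y - (Xᵀ * X)⁻¹ *ᵥ (Hᵀ *ᵥ restrictionMultiplier X H h Y)

theorem mulVec_restrictedLeastSquares {X : Matrix n p R} {H : Matrix q p R}
    (hH : IsUnit (H * (Xᵀ * X)⁻¹ * Hᵀ)) (h : q → R) (Y : n → R) :
    H *ᵥ restrictedLeastSquares X H h Y = h := by
  rw [Matrix.mul_assoc] at hH
  rw [restrictedLeastSquares, restrictionMultiplier, mulVec_mulVec, Matrix.mul_assoc]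
  exact mulVec_sub_mulVec_inv_mulVec hH (leastSquares X Y) h

theorem restricted_lse_general [LinearOrder R] [IsOrderedRing R] {X : Matrix n p R}
    {H : Matrix q p R} (h : q → R) (Y : n → R)
    (hC : IsUnit (Xᵀ * X)) (hH : IsUnit (H * (Xᵀ * X)⁻¹ * Hᵀ)) :
    H *ᵥ restrictedLeastSquares X H h Y = h ∧
      ∀ β : p → R, H *ᵥ β = h →
        residualSumSq X Y (restrictedLeastSquares X H h Y) ≤ residualSumSq X Y β := by
  have feasible := mulVec_restrictedLeastSquares hH h Y
  exact ⟨feasible, fun β hβ => residualSumSq_le_of_transpose_mulVec_eq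
    (transpose_mulVec_sub_mulVec_leastSquares_sub hC Y _) (hβ.trans feasible.symm)⟩

end RestrictedLeastSquares

/-- **Restricted least squares estimator.**
With `C = XᵀX` invertible, `HC⁻¹Hᵀ` invertible, `β̃ = C⁻¹XᵀY`, the estimator
`β̂ = β̃ − C⁻¹Hᵀ(HC⁻¹Hᵀ)⁻¹(Hβ̃ − h)` satisfies the restriction `Hβ̂ = h` and
minimizes the least-squares criterion over `{β : Hβ = h}`. -/
theorem restricted_lse (n p q : ℕ) (X : Matrix (Fin n) (Fin p) ℝ)
    (H : Matrix (Fin q) (Fin p) ℝ) (h : Fin q → ℝ) (Y : Fin n → ℝ)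
    (hC : IsUnit (Xᵀ * X)) (hH : IsUnit (H * (Xᵀ * X)⁻¹ * Hᵀ)) :
    let C := Xᵀ * X
    let βt := C⁻¹.mulVec (Xᵀ.mulVec Y)
    let βhat := βt - C⁻¹.mulVec (Hᵀ.mulVec ((H * C⁻¹ * Hᵀ)⁻¹.mulVec (H.mulVec βt - h)))
    H.mulVec βhat = h ∧
      ∀ β : Fin p → ℝ, H.mulVec β = h →
        (∑ i, (Y i - X.mulVec βhat i) ^ 2) ≤ ∑ i, (Y i - X.mulVec β i) ^ 2 :=
  restricted_lse_general h Y hC hH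
end

section
/- (Monotonicity of the noncentral chi-square CDF in the degrees of freedom.) For every integer m ≥ 1, every δ ≥ 0, and every x ∈ ℝ, one has H_{m+2}(x; δ) ≤ H_m(x; δ). -/
open MeasureTheory

/-- CDF of the central chi-square distribution with `d` degrees of freedom,
i.e. the Gamma distribution with shape `d/2` and rate `1/2`. -/
noncomputable def chiSqCDF (d : ℕ) (x : ℝ) : ℝ :=
  if 0 ≤ x then
    ∫ t in (0 : ℝ)..x,
      ((1 / 2 : ℝ) ^ ((d : ℝ) / 2) / Real.Gamma ((d : ℝ) / 2)) *
        t ^ ((d : ℝ) / 2 - 1) * Real.exp (-t / 2)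
  else 0

/-- CDF of the noncentral chi-square distribution with `m` degrees of freedom and
noncentrality `δ`: `H_m(x; δ) = Σⱼ e^{−δ/2} (δ/2)ʲ/j! · G_{m+2j}(x)`. -/
noncomputable def ncChiSqCDF (m : ℕ) (δ x : ℝ) : ℝ :=
  ∑' j : ℕ, Real.exp (-δ / 2) * (δ / 2) ^ j / (Nat.factorial j) * chiSqCDF (m + 2 * j) x

/-!
The derivative of the gamma density with shape `a + 1` and rate `r` is `r` times the difference
of the densities with shapes `a` and `a + 1`. Integrating, the distribution functions with
shapes `a` and `a + 1` differ by `r⁻¹` times the density with shape `a + 1`, which is nonnegative.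
Two extra degrees of freedom raise the shape `d / 2` of the chi-square distribution by one, and the
noncentral distribution is a mixture of central ones with nonnegative weights.
-/

open ProbabilityTheory Set

section GammaDistribution

variable {a r : ℝ}

lemma gammaPDFReal_of_neg {x : ℝ} (hx : x < 0) : gammaPDFReal a r x = 0 :=
  if_neg hx.not_ge

lemma gammaPDFReal_of_nonneg {x : ℝ} (hx : 0 ≤ x) :
    gammaPDFReal a r x = r ^ a / Real.Gamma a * x ^ (a - 1) * Real.exp (-(r * x)) :=
  if_pos hx

lemma continuous_gammaPDFReal (ha : 1 < a) : Continuous (gammaPDFReal a r) := by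
  have hpow : Continuous fun x : ℝ => x ^ (a - 1) := Real.continuous_rpow_const (by linarith)
  refine Continuous.if_le (by fun_prop) continuous_const continuous_const continuous_id ?_
  rintro x rfl
  simp [Real.zero_rpow (sub_pos.mpr ha).ne']

lemma hasDerivAt_gammaPDFReal_add_one (ha : a ≠ 0) (hr : r ≠ 0) {x : ℝ} (hx : x ≠ 0) :
    HasDerivAt (gammaPDFReal (a + 1) r)
      (r * (gammaPDFReal a r x - gammaPDFReal (a + 1) r x)) x := by
  rcases hx.lt_or_gt with hneg | hpos
  · have hzero : gammaPDFReal (a + 1) r =ᶠ[nhds x] fun _ => 0 := by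
      filter_upwards [Iio_mem_nhds hneg] with y hy using gammaPDFReal_of_neg hy
    simpa [gammaPDFReal_of_neg hneg] using (hasDerivAt_const x (0 : ℝ)).congr_of_eventuallyEq hzero
  · have hformula : gammaPDFReal (a + 1) r =ᶠ[nhds x]
        fun y => r ^ (a + 1) / Real.Gamma (a + 1) * (y ^ a * Real.exp (-(r * y))) := by
      filter_upwards [Ioi_mem_nhds hpos] with y hy
      rw [gammaPDFReal_of_nonneg (mem_Ioi.mp hy).le, add_sub_cancel_right, mul_assoc]
    have hpow : HasDerivAt (fun y : ℝ => y ^ a) (a * x ^ (a - 1)) x :=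
      Real.hasDerivAt_rpow_const (Or.inl hx)
    have hexp : HasDerivAt (fun y => Real.exp (-(r * y))) (Real.exp (-(r * x)) * -(r * 1)) x :=
      ((hasDerivAt_id x).const_mul r).neg.exp
    refine (((hpow.mul hexp).const_mul _).congr_of_eventuallyEq hformula).congr_deriv ?_
    rw [gammaPDFReal_of_nonneg hpos.le, gammaPDFReal_of_nonneg hpos.le, Real.Gamma_add_one ha,
      Real.rpow_add_one hr, add_sub_cancel_right]
    field_simp
    ring

lemma integrable_gammaPDFReal (ha : 0 < a) (hr : 0 < r) : Integrable (gammaPDFReal a r) := by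
  have hlintegral : ∫⁻ x, ENNReal.ofReal (gammaPDFReal a r x) = 1 := lintegral_gammaPDF_eq_one ha hr
  rw [← lintegral_ofReal_ne_top_iff_integrable (by fun_prop)
    (ae_of_all _ (gammaPDFReal_nonneg ha hr)), hlintegral]
  exact ENNReal.one_ne_top

lemma cdf_gammaMeasure_eq_intervalIntegral (ha : 0 < a) (hr : 0 < r) (x : ℝ) :
    cdf (gammaMeasure a r) x = ∫ t in (0 : ℝ)..x, gammaPDFReal a r t := by
  have hint := integrable_gammaPDFReal ha hr
  have hIic : ∫ t in Iic (0 : ℝ), gammaPDFReal a r t = 0 := by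
    rw [integral_Iic_eq_integral_Iio]
    exact setIntegral_eq_zero_of_forall_eq_zero fun t ht => gammaPDFReal_of_neg ht
  rw [cdf_gammaMeasure_eq_integral ha hr,
    ← intervalIntegral.integral_Iic_sub_Iic hint.integrableOn hint.integrableOn, hIic, sub_zero]

lemma cdf_gammaMeasure_sub_cdf_gammaMeasure_add_one (ha : 0 < a) (hr : 0 < r) (x : ℝ) :
    cdf (gammaMeasure a r) x - cdf (gammaMeasure (a + 1) r) x =
      r⁻¹ * gammaPDFReal (a + 1) r x := by
  have ha' : 0 < a + 1 := by linarith
  have hint := (integrable_gammaPDFReal ha hr).intervalIntegrable (a := 0) (b := x)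
  have hint' := (integrable_gammaPDFReal ha' hr).intervalIntegrable (a := 0) (b := x)
  have hzero : gammaPDFReal (a + 1) r 0 = 0 := by
    simp [gammaPDFReal_of_nonneg, Real.zero_rpow ha.ne']
  have hFTC : ∫ t in (0 : ℝ)..x, r * (gammaPDFReal a r t - gammaPDFReal (a + 1) r t) =
      gammaPDFReal (a + 1) r x - gammaPDFReal (a + 1) r 0 :=
    integral_eq_of_hasDerivAt_off_countable _ _ (countable_singleton 0)
      (continuous_gammaPDFReal (by linarith)).continuousOn
      (fun t ht => hasDerivAt_gammaPDFReal_add_one ha.ne' hr.ne' ht.2)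
      ((hint.sub hint').const_mul r)
  rw [intervalIntegral.integral_const_mul, intervalIntegral.integral_sub hint hint', hzero,
    sub_zero, ← cdf_gammaMeasure_eq_intervalIntegral ha hr,
    ← cdf_gammaMeasure_eq_intervalIntegral ha' hr] at hFTC
  rw [← hFTC, inv_mul_cancel_left₀ hr.ne']

lemma cdf_gammaMeasure_add_one_le (ha : 0 < a) (hr : 0 < r) (x : ℝ) :
    cdf (gammaMeasure (a + 1) r) x ≤ cdf (gammaMeasure a r) x := by
  have hpdf : 0 ≤ gammaPDFReal (a + 1) r x := gammaPDFReal_nonneg (by linarith) hr x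
  rw [← sub_nonneg, cdf_gammaMeasure_sub_cdf_gammaMeasure_add_one ha hr]
  positivity

end GammaDistribution

section ChiSquare

variable {d m : ℕ}

lemma chiSqCDF_eq_cdf_gammaMeasure (hd : 1 ≤ d) (x : ℝ) :
    chiSqCDF d x = cdf (gammaMeasure (d / 2) (1 / 2)) x := by
  have hshape : (0 : ℝ) < d / 2 := by positivity
  rcases lt_or_ge x 0 with hx | hx
  · rw [chiSqCDF, if_neg hx.not_ge, cdf_gammaMeasure_eq_integral hshape one_half_pos,
      setIntegral_eq_zero_of_forall_eq_zero fun t ht => gammaPDFReal_of_neg (ht.trans_lt hx)]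
  · rw [chiSqCDF, if_pos hx, cdf_gammaMeasure_eq_intervalIntegral hshape one_half_pos]
    refine intervalIntegral.integral_congr fun t ht => ?_
    rw [uIcc_of_le hx] at ht
    simp only [gammaPDFReal_of_nonneg ht.1]
    ring_nf

lemma chiSqCDF_nonneg (hd : 1 ≤ d) (x : ℝ) : 0 ≤ chiSqCDF d x :=
  chiSqCDF_eq_cdf_gammaMeasure hd x ▸ cdf_nonneg _ x

lemma chiSqCDF_le_one (hd : 1 ≤ d) (x : ℝ) : chiSqCDF d x ≤ 1 :=
  chiSqCDF_eq_cdf_gammaMeasure hd x ▸ cdf_le_one _ x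

lemma chiSqCDF_add_two_le (hd : 1 ≤ d) (x : ℝ) : chiSqCDF (d + 2) x ≤ chiSqCDF d x := by
  have hshape : ((d + 2 : ℕ) : ℝ) / 2 = d / 2 + 1 := by push_cast; ring
  rw [chiSqCDF_eq_cdf_gammaMeasure hd, chiSqCDF_eq_cdf_gammaMeasure (by lia), hshape]
  exact cdf_gammaMeasure_add_one_le (by positivity) one_half_pos x

lemma summable_exp_mul_pow_div_factorial_mul_chiSqCDF (hm : 1 ≤ m) (δ x : ℝ) :
    Summable fun j : ℕ =>
      Real.exp (-δ / 2) * (δ / 2) ^ j / (Nat.factorial j) * chiSqCDF (m + 2 * j) x := by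
  have hweights : Summable fun j : ℕ => Real.exp (-δ / 2) * (δ / 2) ^ j / (Nat.factorial j) := by
    simpa only [mul_div_assoc] using
      (Real.summable_pow_div_factorial (δ / 2)).mul_left (Real.exp (-δ / 2))
  refine hweights.norm.of_norm_bounded fun j => ?_
  rw [norm_mul, Real.norm_of_nonneg (chiSqCDF_nonneg (by lia) x)]
  exact mul_le_of_le_one_right (norm_nonneg _) (chiSqCDF_le_one (by lia) x)

end ChiSquare

/-- **Monotonicity of the noncentral chi-square CDF in the degrees of freedom:**
`H_{m+2}(x; δ) ≤ H_m(x; δ)`. -/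
theorem ncChiSqCDF_anti_dof (m : ℕ) (hm : 1 ≤ m) (δ : ℝ) (hδ : 0 ≤ δ) (x : ℝ) :
    ncChiSqCDF (m + 2) δ x ≤ ncChiSqCDF m δ x := by
  refine Summable.tsum_le_tsum (fun j => ?_)
    (summable_exp_mul_pow_div_factorial_mul_chiSqCDF (by lia) δ x)
    (summable_exp_mul_pow_div_factorial_mul_chiSqCDF hm δ x)
  have hstep : chiSqCDF (m + 2 + 2 * j) x ≤ chiSqCDF (m + 2 * j) x := by
    rw [add_right_comm]
    exact chiSqCDF_add_two_le (by lia) x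
  gcongr
end
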